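/- For every integer d ≥ 2, every connected 2d-regular simple graph admits an antimagic orientation. That is, if G is a finite connected simple graph in which every vertex has degree exactly 2d for some integer d ≥ 2, then there exist an orientation D of G and a bijection c from the arc set of D to {1, 2, …, m} (where m is the number of edges of G) such that the vertex-sums of all vertices of D under c are pairwise distinct. -/

import Mathlib

open Finset

/-- `A` is an orientation of the simple graph `G`: every edge of `G` receives exactly one
direction, and every arc of `A` comes from an edge of `G`. -/
def IsOrientation {V : Type*} (G : SimpleGraph V) (A : Finset (V × V)) : Prop :=
  (∀ u v : V, G.Adj u v ↔ ((u, v) ∈ A ∨ (v, u) ∈ A)) ∧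
    ∀ u v : V, ¬((u, v) ∈ A ∧ (v, u) ∈ A)

/-- The vertex-sum of `u` for the arc-labeling `c`: the sum of labels of arcs entering `u`
minus the sum of labels of arcs leaving `u`. -/
def vertexSum {V : Type*} [DecidableEq V] (A : Finset (V × V)) (c : V × V → ℤ) (u : V) : ℤ :=
  (∑ a ∈ A.filter (fun a => a.2 = u), c a) - ∑ a ∈ A.filter (fun a => a.1 = u), c a

/-!
Follow an Eulerian circuit of a connected graph with even degrees, give its `i`-th step a signed
label `x i`, and orient that step along the circuit exactly when `x i > 0`. The vertex-sum of `u` is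
then the sum, over the visits of the circuit to `u`, of the drop `x i - x (i + 1)` from the step
arriving at `u` to the step leaving it. Single out one visit to each vertex. If every other visit
has drop `-1` and the singled out visits have distinct drops, then the numbers
`vertexSum u + degree u / 2` are pairwise distinct, and for a regular graph so are the vertex-sums.

Such labels exist as soon as the visits at the two ends of the first step are singled out. That step
is labeled `-m`, which makes the drops at its ends the two extreme ones, and the remaining steps,
cut at the singled out visits into runs, receive `1, …, m - 1`, increasing by `1` along each run.
The first run takes the highest block of labels, the second the lowest, the third the highest block
left, and so on; the drops between consecutive runs then span nested intervals with alternating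
signs, hence are distinct.
-/

section EulerianCircuit

variable {V : Type*} {G : SimpleGraph V}

/-- A trail of `G` at least as long as every other trail of `G`, whatever the end points. -/
def IsLongestTrail {u v : V} (p : G.Walk u v) : Prop :=
  p.IsTrail ∧ ∀ (a b : V) (q : G.Walk a b), q.IsTrail → q.length ≤ p.length

namespace IsLongestTrail

variable {u v : V}

theorem mk_mem_edges {p : G.Walk u v} (hp : IsLongestTrail p) {a : V} (ha : G.Adj a u) :
    s(a, u) ∈ p.edges := by
  by_contra hmem
  have hle := hp.2 a v (.cons ha p) (by simp [hp.1, hmem])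
  exact (Nat.lt_succ_self p.length).not_ge hle

theorem countP_edges [Fintype V] [DecidableEq V] [DecidableRel G.Adj] {p : G.Walk u v}
    (hp : IsLongestTrail p) :
    p.edges.countP (u ∈ ·) = G.degree u := by
  rw [← G.card_incidenceFinset_eq_degree, List.countP_eq_length_filter,
    ← List.toFinset_card_of_nodup (hp.1.edges_nodup.filter _)]
  congr 1
  ext e
  simp only [List.mem_toFinset, List.mem_filter, decide_eq_true_eq,
    SimpleGraph.mem_incidenceFinset]
  refine ⟨fun ⟨he, hu⟩ => ⟨p.edges_subset_edgeSet he, hu⟩, fun ⟨he, hu⟩ => ⟨?_, hu⟩⟩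
  obtain ⟨a, rfl⟩ := hu
  rw [Sym2.eq_swap]
  exact hp.mk_mem_edges he.symm

theorem eq_of_even_degree [Fintype V] [DecidableRel G.Adj] {p : G.Walk u v}
    (hp : IsLongestTrail p) (hu : Even (G.degree u)) : u = v := by
  classical
  by_contra huv
  rw [← hp.countP_edges] at hu
  exact ((hp.1.even_countP_edges_iff u).1 hu huv).1 rfl

variable [DecidableEq V]

theorem rotate {p : G.Walk u u} (hp : IsLongestTrail p) (hv : v ∈ p.support) :
    IsLongestTrail (p.rotate v hv) :=
  ⟨hp.1.rotate hv, by simpa using hp.2⟩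

theorem isEulerian {p : G.Walk u u} (hp : IsLongestTrail p) (hG : G.Connected) :
    p.IsEulerian := by
  have mem_edges {a b : V} (hb : b ∈ p.support) (hab : G.Adj a b) : s(a, b) ∈ p.edges :=
    (p.rotate_edges b hb).mem_iff.1 ((hp.rotate hb).mk_mem_edges hab)
  have mem_support (a : V) : a ∈ p.support := by
    obtain ⟨q⟩ := hG.preconnected a u
    induction q with
    | nil => simp
    | cons hab _ ih => exact p.fst_mem_support_of_mem_edges (mem_edges (ih hp mem_edges) hab)
  refine hp.1.isEulerian_of_forall_mem fun e => ?_
  induction e with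
  | _ a b => exact mem_edges (mem_support b)

end IsLongestTrail

theorem exists_isEulerian_of_even_degree [Fintype V] [DecidableEq V] [DecidableRel G.Adj]
    (hG : G.Connected) (heven : ∀ v, Even (G.degree v)) :
    ∃ (u : V) (p : G.Walk u u), p.IsEulerian := by
  have := hG.nonempty
  obtain ⟨u, v, p, hp, hmax⟩ := SimpleGraph.Walk.exists_isTrail_forall_isTrail_length_le_length G
  have hlongest : IsLongestTrail p := ⟨hp, hmax⟩
  obtain rfl := hlongest.eq_of_even_degree (heven u)
  exact ⟨u, p, hlongest.isEulerian hG⟩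

theorem bijOn_mk_getVert_of_isEulerian [DecidableEq V] {u v : V} {p : G.Walk u v}
    (hp : p.IsEulerian) :
    Set.BijOn (fun i => s(p.getVert i, p.getVert (i + 1))) (range p.length) G.edgeSet := by
  refine ⟨fun i hi => p.adj_getVert_succ (by simpa using hi), fun i hi j hj hij => ?_,
    fun e he => ?_⟩
  · simp only [coe_range, Set.mem_Iio, ← p.length_edges] at hi hj
    refine (hp.isTrail.edges_nodup.getElem_inj_iff (hi := hi) (hj := hj)).1 ?_
    simpa only [p.getElem_edges] using hij
  · obtain ⟨i, hi, rfl⟩ := List.getElem_of_mem (hp.mem_edges_iff.2 he)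
    exact ⟨i, by simpa using hi, (p.getElem_edges hi).symm⟩

end EulerianCircuit

section ArcFamily

variable {V ι : Type*}

/-- The arc `a`, reversed unless the signed label `x` is positive. -/
def signedArc (a : V × V) (x : ℤ) : V × V := if 0 < x then a else a.swap

theorem mk_signedArc (a : V × V) (x : ℤ) :
    s((signedArc a x).1, (signedArc a x).2) = s(a.1, a.2) := by
  unfold signedArc
  split_ifs
  exacts [rfl, Sym2.eq_swap]

variable [DecidableEq V]

theorem signedArc_contribution (a : V × V) (x : ℤ) (u : V) :
    ((if (signedArc a x).2 = u then |x| else 0) - if (signedArc a x).1 = u then |x| else 0) =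
      (if a.2 = u then x else 0) - if a.1 = u then x else 0 := by
  unfold signedArc
  split_ifs <;> grind

variable {G : SimpleGraph V} {t : Finset ι} {f : ι → V × V}

theorem isOrientation_image (hf : Set.BijOn (fun i => s((f i).1, (f i).2)) t G.edgeSet) :
    IsOrientation G (t.image f) := by
  refine ⟨fun u v => ⟨fun huv => ?_, ?_⟩, fun u v ⟨huv, hvu⟩ => ?_⟩
  · obtain ⟨i, hi, he⟩ := hf.surjOn (G.mem_edgeSet.2 huv)
    rcases Sym2.eq_iff.1 he with ⟨h₁, h₂⟩ | ⟨h₁, h₂⟩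
    · exact .inl (mem_image.2 ⟨i, hi, Prod.ext h₁ h₂⟩)
    · exact .inr (mem_image.2 ⟨i, hi, Prod.ext h₁ h₂⟩)
  · have adj_of_mem {a b : V} (hab : (a, b) ∈ t.image f) : G.Adj a b := by
      obtain ⟨i, hi, he⟩ := mem_image.1 hab
      simpa [he] using hf.mapsTo hi
    rintro (huv | hvu)
    exacts [adj_of_mem huv, (adj_of_mem hvu).symm]
  · obtain ⟨i, hi, hfi⟩ := mem_image.1 huv
    obtain ⟨j, hj, hfj⟩ := mem_image.1 hvu
    obtain rfl : i = j := hf.injOn hi hj (by simp [hfi, hfj, Sym2.eq_swap])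
    have huv : u = v := congrArg Prod.fst (hfi.symm.trans hfj)
    have hadj := hf.mapsTo hi
    simp [hfi, huv] at hadj

theorem degree_eq_sum [Fintype V] [DecidableRel G.Adj]
    (hf : Set.BijOn (fun i => s((f i).1, (f i).2)) t G.edgeSet) (u : V) :
    (G.degree u : ℤ) =
      ∑ i ∈ t, ((if (f i).2 = u then 1 else 0) + if (f i).1 = u then 1 else 0) := by
  have hedges : G.edgeFinset = t.image fun i => s((f i).1, (f i).2) := by
    rw [← coe_inj, coe_image, hf.image_eq, G.coe_edgeFinset]
  rw [← G.card_incidenceFinset_eq_degree, G.incidenceFinset_eq_filter, card_filter, hedges,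
    sum_image hf.injOn]
  push_cast
  refine sum_congr rfl fun i hi => ?_
  have hne : (f i).1 ≠ (f i).2 := G.ne_of_adj (hf.mapsTo hi)
  grind

theorem vertexSum_image (hf : Set.InjOn f t) (c : V × V → ℤ) (u : V) :
    vertexSum (t.image f) c u =
      ∑ i ∈ t, ((if (f i).2 = u then c (f i) else 0) - if (f i).1 = u then c (f i) else 0) := by
  rw [vertexSum, sum_filter, sum_filter, sum_image hf, sum_image hf, sum_sub_distrib]

theorem exists_isOrientation_vertexSum_eq_sum {x : ι → ℤ} {L : Set ℤ}
    (hf : Set.BijOn (fun i => s((f i).1, (f i).2)) t G.edgeSet)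
    (hx : Set.BijOn (fun i => |x i|) t L) :
    ∃ (A : Finset (V × V)) (c : V × V → ℤ), IsOrientation G A ∧ Set.BijOn c A L ∧
      ∀ u, vertexSum A c u =
        ∑ i ∈ t, ((if (f i).2 = u then x i else 0) - if (f i).1 = u then x i else 0) := by
  let g (i : ι) : V × V := signedArc (f i) (x i)
  have hg : Set.BijOn (fun i => s((g i).1, (g i).2)) t G.edgeSet := by
    simpa only [g, mk_signedArc] using hf
  have hgi : Set.InjOn g t := fun i hi j hj hij => hg.injOn hi hj (by simp only [hij])
  obtain ⟨c, hc⟩ : ∃ c : V × V → ℤ, ∀ i ∈ t, c (g i) = |x i| := by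
    refine ⟨Function.extend ((t : Set ι).domRestrict g) (fun i => |x i|) 0, fun i hi => ?_⟩
    exact hgi.injective.extend_apply _ _ ⟨i, hi⟩
  refine ⟨t.image g, c, isOrientation_image hg, ?_, fun u => ?_⟩
  · rw [coe_image, ← Set.bijOn_comp_iff hgi]
    exact hx.congr fun i hi => (hc i hi).symm
  · rw [vertexSum_image hgi]
    refine sum_congr rfl fun i hi => ?_
    rw [hc i hi]
    exact signedArc_contribution (f i) (x i) u

end ArcFamily

section Labels

section Rank

variable {ι α : Type*} {t : Finset ι} {k : ι → α} {i j : ι}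

/-- The number of `j ∈ t` with `k j ≤ k i`: the position, counted from `1`, of `i` in the list of
`t` sorted by the key `k`. -/
def rankIn [Preorder α] [DecidableLE α] (t : Finset ι) (k : ι → α) (i : ι) : ℕ :=
  #{j ∈ t | k j ≤ k i}

theorem rankIn_le_card [Preorder α] [DecidableLE α] (t : Finset ι) (k : ι → α) (i : ι) :
    rankIn t k i ≤ #t :=
  card_filter_le _ _

theorem rankIn_pos [Preorder α] [DecidableLE α] (hi : i ∈ t) : 0 < rankIn t k i :=
  card_pos.2 ⟨i, mem_filter.2 ⟨hi, le_rfl⟩⟩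

theorem rankIn_lt_rankIn [Preorder α] [DecidableLE α] (hj : j ∈ t) (hij : k i < k j) :
    rankIn t k i < rankIn t k j := by
  refine card_lt_card ((ssubset_iff_of_subset ?_).2 ⟨j, ?_, ?_⟩)
  · exact monotone_filter_right t fun _ _ hl => hl.trans hij.le
  · exact mem_filter.2 ⟨hj, le_rfl⟩
  · exact fun h => (mem_filter.1 h).2.not_gt hij

theorem rankIn_eq_rankIn_add_one [Preorder α] [DecidableLE α] (hj : j ∈ t) (hij : k i < k j)
    (hgap : ∀ l ∈ t, k l ≤ k j → l = j ∨ k l ≤ k i) : rankIn t k j = rankIn t k i + 1 := by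
  classical
  have hnotMem : j ∉ ({l ∈ t | k l ≤ k i} : Finset ι) := fun h => (mem_filter.1 h).2.not_gt hij
  rw [rankIn, rankIn, ← card_insert_of_notMem hnotMem]
  congr 1
  ext l
  grind [hij.le]

end Rank

/-- The height of the `r`-th run of labels, for `r ≤ N`: the even runs climb from `-N`, the odd ones
descend from `N`. -/
def zigzag (N r : ℕ) : ℤ := if Even r then r - N else N - r

theorem zigzag_lt_zigzag_of_even {N a b : ℕ} (ha : Even a) (hab : a < b) (hb : b ≤ N) :
    zigzag N a < zigzag N b := by
  grind [zigzag]

theorem zigzag_lt_zigzag_of_odd {N a b : ℕ} (ha : Odd a) (hab : a < b) (hb : b ≤ N) :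
    zigzag N b < zigzag N a := by
  grind [zigzag]

variable {m : ℕ} {S : Set ℕ} [DecidablePred (· ∈ S)] {i j : ℕ}

/-- The key by which the steps `1, …, m - 1` are ordered to receive their labels: the height of the
run containing the step, then the step itself. A break at `i ∈ S` separates the steps `i` and
`i + 1`, so step `i` lies in the run numbered `Nat.count (· ∈ S) i`. -/
def runKey (m : ℕ) (S : Set ℕ) [DecidablePred (· ∈ S)] (i : ℕ) : ℤ ×ₗ ℕ :=
  toLex (zigzag m (Nat.count (· ∈ S) i), i)

theorem runKey_injective : Function.Injective (runKey m S) := fun i j hij => by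
  simpa [runKey] using congrArg (fun a => (ofLex a).2) hij

/-- The label of step `i` of a closed walk of length `m`. Step `m` is step `0` again. -/
noncomputable def zigzagLabel (m : ℕ) (S : Set ℕ) [DecidablePred (· ∈ S)] (i : ℕ) : ℤ :=
  if i = 0 ∨ i = m then -m else rankIn (Ico 1 m) (runKey m S) i

theorem zigzagLabel_zero : zigzagLabel m S 0 = -m := if_pos (.inl rfl)

theorem zigzagLabel_self : zigzagLabel m S m = -m := if_pos (.inr rfl)

theorem zigzagLabel_of_mem_Ico (hi : i ∈ Ico 1 m) :
    zigzagLabel m S i = rankIn (Ico 1 m) (runKey m S) i :=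
  if_neg (by rw [mem_Ico] at hi; omega)

theorem zigzagLabel_mem_Ico (hi : i ∈ Ico 1 m) : zigzagLabel m S i ∈ Ico (1 : ℤ) m := by
  have hle := rankIn_le_card (Ico 1 m) (runKey m S) i
  have hpos := rankIn_pos (k := runKey m S) hi
  rw [zigzagLabel_of_mem_Ico hi]
  rw [mem_Ico] at hi ⊢
  rw [Nat.card_Ico] at hle
  omega

theorem zigzagLabel_lt_zigzagLabel (hi : i ∈ Ico 1 m) (hj : j ∈ Ico 1 m)
    (hij : runKey m S i < runKey m S j) : zigzagLabel m S i < zigzagLabel m S j := by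
  rw [zigzagLabel_of_mem_Ico hi, zigzagLabel_of_mem_Ico hj]
  exact_mod_cast rankIn_lt_rankIn hj hij

theorem injOn_zigzagLabel : Set.InjOn (zigzagLabel m S) (Ico 1 m) := by
  intro i hi j hj hij
  by_contra hne
  rcases lt_or_gt_of_ne ((runKey_injective (m := m) (S := S)).ne hne) with hlt | hlt
  exacts [(zigzagLabel_lt_zigzagLabel hi hj hlt).ne hij,
    (zigzagLabel_lt_zigzagLabel hj hi hlt).ne' hij]

theorem bijOn_abs_zigzagLabel (m : ℕ) (S : Set ℕ) [DecidablePred (· ∈ S)] :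
    Set.BijOn (fun i => |zigzagLabel m S i|) (range m) (Set.Icc 1 m) := by
  have abs_label_zero : |zigzagLabel m S 0| = m := by rw [zigzagLabel_zero, abs_neg, Nat.abs_cast]
  have abs_label_eq {i : ℕ} (hi : i ∈ Ico 1 m) : |zigzagLabel m S i| = zigzagLabel m S i :=
    abs_of_pos (mem_Ico.1 (zigzagLabel_mem_Ico hi)).1
  have abs_label_lt {i : ℕ} (hi : i ∈ Ico 1 m) : |zigzagLabel m S i| < m :=
    (abs_label_eq hi).trans_lt (mem_Ico.1 (zigzagLabel_mem_Ico hi)).2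
  have mem_cases {i : ℕ} (hi : i ∈ (range m : Set ℕ)) : i = 0 ∨ i ∈ Ico 1 m := by
    rw [coe_range, Set.mem_Iio] at hi
    rw [mem_Ico]
    omega
  have hmaps : Set.MapsTo (fun i => |zigzagLabel m S i|) (range m) (Icc (1 : ℤ) m) := by
    intro i hi
    rw [mem_coe, mem_Icc]
    rcases mem_cases hi with rfl | hi'
    · have hm : 0 < m := mem_range.1 hi
      simpa only [abs_label_zero, le_refl, and_true] using mod_cast hm
    · exact ⟨(mem_Ico.1 (zigzagLabel_mem_Ico hi')).1.trans (abs_label_eq hi').ge,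
        (abs_label_lt hi').le⟩
  have hinj : Set.InjOn (fun i => |zigzagLabel m S i|) (range m) := by
    intro i hi j hj (hij : |zigzagLabel m S i| = |zigzagLabel m S j|)
    rcases mem_cases hi with rfl | hi' <;> rcases mem_cases hj with rfl | hj'
    · rfl
    · exact absurd (hij.symm.trans abs_label_zero) (abs_label_lt hj').ne
    · exact absurd (hij.trans abs_label_zero) (abs_label_lt hi').ne
    · exact injOn_zigzagLabel hi' hj' (by rwa [abs_label_eq hi', abs_label_eq hj'] at hij)
  rw [← coe_Icc]
  exact ⟨hmaps, hinj, surjOn_of_injOn_of_card_le _ hmaps hinj (by simp)⟩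

theorem zigzagLabel_succ (hi : i ∈ Ico 1 m) (hi' : i + 1 ∈ Ico 1 m) (hS : i ∉ S) :
    zigzagLabel m S (i + 1) = zigzagLabel m S i + 1 := by
  have hcount : Nat.count (· ∈ S) (i + 1) = Nat.count (· ∈ S) i := Nat.count_succ_eq_count_iff.2 hS
  rw [zigzagLabel_of_mem_Ico hi, zigzagLabel_of_mem_Ico hi']
  refine mod_cast rankIn_eq_rankIn_add_one hi' ?_ fun l _ hl => ?_
  · simp [runKey, Prod.Lex.toLex_lt_toLex, hcount]
  · simp only [runKey, Prod.Lex.toLex_le_toLex, hcount] at hl ⊢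
    omega

theorem runKey_lt_runKey_of_even (hj : j < m) (hij : Nat.count (· ∈ S) i < Nat.count (· ∈ S) j)
    (hi : Even (Nat.count (· ∈ S) i)) : runKey m S i < runKey m S j :=
  Prod.Lex.toLex_lt_toLex.2 <| .inl <|
    zigzag_lt_zigzag_of_even hi hij ((Nat.count_le _).trans hj.le)

theorem runKey_lt_runKey_of_odd (hj : j < m) (hij : Nat.count (· ∈ S) i < Nat.count (· ∈ S) j)
    (hi : Odd (Nat.count (· ∈ S) i)) : runKey m S j < runKey m S i :=
  Prod.Lex.toLex_lt_toLex.2 <| .inl <|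
    zigzag_lt_zigzag_of_odd hi hij ((Nat.count_le _).trans hj.le)

theorem zigzagLabel_sub_ne_of_mem_Ico (hi : i ∈ Ico 1 m) (hiS : i ∈ S) (hjS : j ∈ S) (hij : i < j)
    (hj : j + 1 < m) :
    zigzagLabel m S i - zigzagLabel m S (i + 1) ≠ zigzagLabel m S j - zigzagLabel m S (j + 1) := by
  have hi' : i + 1 ∈ Ico 1 m := mem_Ico.2 (by omega)
  have hjm : j ∈ Ico 1 m := mem_Ico.2 (by omega)
  have hj' : j + 1 ∈ Ico 1 m := mem_Ico.2 (by omega)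
  have hcount : Nat.count (· ∈ S) (i + 1) = Nat.count (· ∈ S) i + 1 :=
    Nat.count_succ_eq_succ_count_iff.2 hiS
  have hcount_i : Nat.count (· ∈ S) i < Nat.count (· ∈ S) j := Nat.count_strict_mono hiS hij
  have hcount_succ : Nat.count (· ∈ S) (i + 1) < Nat.count (· ∈ S) (j + 1) :=
    (Nat.count_monotone _ hij).trans_lt (Nat.count_strict_mono hjS j.lt_succ_self)
  -- The labels at the later break lie between those at the earlier one.
  rcases Nat.even_or_odd (Nat.count (· ∈ S) i) with hpar | hpar
  · have hlow := zigzagLabel_lt_zigzagLabel hi hjm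
      (runKey_lt_runKey_of_even (by omega) hcount_i hpar)
    have hhigh := zigzagLabel_lt_zigzagLabel hj' hi'
      (runKey_lt_runKey_of_odd (by omega) hcount_succ (hcount ▸ hpar.add_one))
    omega
  · have hhigh := zigzagLabel_lt_zigzagLabel hjm hi
      (runKey_lt_runKey_of_odd (by omega) hcount_i hpar)
    have hlow := zigzagLabel_lt_zigzagLabel hi' hj'
      (runKey_lt_runKey_of_even (by omega) hcount_succ (hcount ▸ hpar.add_one))
    omega

theorem zigzagLabel_sub_ne (hiS : i ∈ S) (hjS : j ∈ S) (hij : i < j) (hj : j < m) :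
    zigzagLabel m S i - zigzagLabel m S (i + 1) ≠ zigzagLabel m S j - zigzagLabel m S (j + 1) := by
  have bounds (l : ℕ) (h₁ : 1 ≤ l) (h₂ : l < m) := mem_Ico.1 (zigzagLabel_mem_Ico (S := S)
    (mem_Ico.2 ⟨h₁, h₂⟩))
  have hjb := bounds j (by omega) hj
  have hib := bounds (i + 1) (by omega) (by omega)
  have hj' : j + 1 = m ∨ j + 1 < m := by omega
  rcases i.eq_zero_or_pos with rfl | hi
  · rw [zigzagLabel_zero]
    rcases hj' with hj' | hj'
    · rw [hj', zigzagLabel_self]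
      omega
    · have := bounds (j + 1) (by omega) hj'
      omega
  · rcases hj' with hj' | hj'
    · have := bounds i hi (by omega)
      rw [hj', zigzagLabel_self]
      omega
    · exact zigzagLabel_sub_ne_of_mem_Ico (mem_Ico.2 ⟨hi, by omega⟩) hiS hjS hij hj'

theorem injOn_zigzagLabel_sub (hS : S ⊆ range m) :
    Set.InjOn (fun i => zigzagLabel m S i - zigzagLabel m S (i + 1)) S := by
  intro i hi j hj h
  by_contra hne
  rcases lt_or_gt_of_ne hne with hij | hji
  · exact zigzagLabel_sub_ne hi hj hij (mem_range.1 (hS hj)) h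
  · exact zigzagLabel_sub_ne hj hi hji (mem_range.1 (hS hi)) h.symm

end Labels

theorem exists_two_mul_vertexSum_add_degree_eq_sum {V : Type*} [Fintype V] [DecidableEq V]
    {G : SimpleGraph V} [DecidableRel G.Adj] {v : V} {p : G.Walk v v} (hp : p.IsEulerian)
    {x : ℕ → ℤ} {L : Set ℤ} (hx : Set.BijOn (fun i => |x i|) (range p.length) L)
    (hclosed : x p.length = x 0) :
    ∃ (A : Finset (V × V)) (c : V × V → ℤ), IsOrientation G A ∧ Set.BijOn c A L ∧
      ∀ u, 2 * vertexSum A c u + G.degree u =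
        ∑ i ∈ range p.length with p.getVert (i + 1) = u, 2 * (x i - x (i + 1) + 1) := by
  have hsteps := bijOn_mk_getVert_of_isEulerian hp
  obtain ⟨A, c, hA, hc, hsum⟩ := exists_isOrientation_vertexSum_eq_sum
    (f := fun i => (p.getVert i, p.getVert (i + 1))) hsteps hx
  refine ⟨A, c, hA, hc, fun u => ?_⟩
  have hshift : ∑ i ∈ range p.length, ((if p.getVert (i + 1) = u then 2 * x (i + 1) - 1 else 0) -
      if p.getVert i = u then 2 * x i - 1 else 0) = 0 := by
    rw [sum_range_sub fun i => if p.getVert i = u then 2 * x i - 1 else 0]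
    simp [hclosed]
  rw [hsum, degree_eq_sum (f := fun i => (p.getVert i, p.getVert (i + 1))) hsteps, mul_sum,
    ← sum_add_distrib, sum_filter, ← sub_eq_zero, ← sum_sub_distrib]
  refine (sum_congr rfl fun i _ => ?_).trans hshift
  split_ifs <;> ring

theorem surjOn_getVert_succ_of_isEulerian {V : Type*} [DecidableEq V] [Nontrivial V]
    {G : SimpleGraph V} (hG : G.Preconnected) {v : V} {p : G.Walk v v} (hp : p.IsEulerian) :
    Set.SurjOn (fun i => p.getVert (i + 1)) (range p.length) Set.univ := by
  intro u _
  obtain ⟨a, hua⟩ := hG.exists_adj_of_nontrivial u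
  obtain ⟨i, hi, he⟩ := p.mk_mem_edges_iff_exists.1 (hp.mem_edges_iff.2 hua)
  rcases Sym2.eq_iff.1 he with ⟨rfl, -⟩ | ⟨-, rfl⟩
  · rcases i with _ | i
    · exact ⟨p.length - 1, mem_range.2 (by omega), by simp [Nat.sub_add_cancel hi]⟩
    · exact ⟨i, mem_range.2 (by omega), rfl⟩
  · exact ⟨i, by simpa using hi, rfl⟩

/-- In the numbering by `range p.length`, visit `i` of a closed walk `p` is the one at the end of
step `i`; visit `p.length - 1` closes the walk. -/
theorem exists_transversal_of_surjOn_getVert_succ {V : Type*} {G : SimpleGraph V} {v : V}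
    {p : G.Walk v v} (hsurj : Set.SurjOn (fun i => p.getVert (i + 1)) (range p.length) Set.univ) :
    ∃ S : Set ℕ, 0 ∈ S ∧ p.length - 1 ∈ S ∧ S ⊆ range p.length ∧
      Set.BijOn (fun i => p.getVert (i + 1)) S Set.univ := by
  obtain ⟨i, hi, -⟩ := hsurj (Set.mem_univ v)
  have hpos : 0 < p.length := i.zero_le.trans_lt (by simpa using hi)
  have hpair : Set.InjOn (fun i => p.getVert (i + 1)) {0, p.length - 1} := by
    have hne : p.getVert 1 ≠ v := by simpa using (p.adj_getVert_succ hpos).ne'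
    simp [Set.injOn_pair, Nat.sub_add_cancel hpos, hne]
  obtain ⟨S, hpairS, hS, hbij⟩ := hpair.bijOn_image.exists_extend_of_subset
    (by simp [Set.insert_subset_iff, hpos]) (Set.subset_univ _) hsurj
  exact ⟨S, hpairS (by simp), hpairS (by simp), hS, hbij⟩

theorem length_eq_card_edgeFinset_of_isEulerian {V : Type*} [DecidableEq V] {G : SimpleGraph V}
    [Fintype G.edgeSet] {u v : V} {p : G.Walk u v} (hp : p.IsEulerian) :
    p.length = #G.edgeFinset := by
  rw [← hp.edgesFinset_eq]
  exact p.length_edges.symm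

theorem connected_even_regular_admits_antimagic_orientation_general
    {V : Type*} [Fintype V] [DecidableEq V]
    (G : SimpleGraph V) [DecidableRel G.Adj]
    (hG : G.Connected) (heven : ∀ v, Even (G.degree v)) :
    ∃ (A : Finset (V × V)) (c : V × V → ℤ),
      IsOrientation G A ∧
      Set.BijOn c ↑A (Set.Icc 1 (G.edgeFinset.card : ℤ)) ∧
      Pairwise fun u v : V =>
        2 * vertexSum A c u + G.degree u ≠ 2 * vertexSum A c v + G.degree v := by
  classical
  rcases subsingleton_or_nontrivial V with hV | hV
  · obtain rfl := Subsingleton.elim G ⊥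
    exact ⟨∅, 0, by simp [IsOrientation], by simp, Subsingleton.pairwise⟩
  obtain ⟨v, p, hp⟩ := exists_isEulerian_of_even_degree hG heven
  obtain ⟨S, hfirst, hlast, hS, hvisit⟩ := exists_transversal_of_surjOn_getVert_succ
    (surjOn_getVert_succ_of_isEulerian hG.preconnected hp)
  let x := zigzagLabel p.length S
  have hdrop (i : ℕ) (hi : i < p.length) (hiS : i ∉ S) : x (i + 1) = x i + 1 := by
    have hi0 : i ≠ 0 := by grind
    have hilast : i ≠ p.length - 1 := by grind
    exact zigzagLabel_succ (mem_Ico.2 (by omega)) (mem_Ico.2 (by omega)) hiS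
  obtain ⟨A, c, hA, hc, hsum⟩ := exists_two_mul_vertexSum_add_degree_eq_sum hp
    (bijOn_abs_zigzagLabel p.length S) (zigzagLabel_self.trans zigzagLabel_zero.symm)
  have hsum' (i : ℕ) (hi : i ∈ S) : 2 * vertexSum A c (p.getVert (i + 1)) +
      G.degree (p.getVert (i + 1)) = 2 * (x i - x (i + 1) + 1) := by
    rw [hsum]
    refine sum_eq_single_of_mem i (by simpa using hS hi) fun j hj hji => ?_
    rw [mem_filter, mem_range] at hj
    have hjS : j ∉ S := fun hjS => hji (hvisit.injOn hjS hi hj.2)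
    linarith [hdrop j hj.1 hjS]
  refine ⟨A, c, hA, length_eq_card_edgeFinset_of_isEulerian hp ▸ hc, fun u v huv h => huv ?_⟩
  obtain ⟨i, hi, rfl⟩ := hvisit.surjOn (Set.mem_univ u)
  obtain ⟨j, hj, rfl⟩ := hvisit.surjOn (Set.mem_univ v)
  obtain rfl := injOn_zigzagLabel_sub hS hi hj (by linarith [hsum' i hi, hsum' j hj])
  rfl

/-- For every integer d ≥ 2, every connected 2d-regular simple graph admits an
antimagic orientation. -/
theorem connected_even_regular_admits_antimagic_orientation
    {V : Type*} [Fintype V] [DecidableEq V]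
    (G : SimpleGraph V) [DecidableRel G.Adj] (d : ℕ) (hd : 2 ≤ d)
    (hconn : G.Connected) (hreg : ∀ v : V, G.degree v = 2 * d) :
    ∃ (A : Finset (V × V)) (c : V × V → ℤ),
      IsOrientation G A ∧
      Set.BijOn c ↑A (Set.Icc 1 (G.edgeFinset.card : ℤ)) ∧
      Pairwise fun u v : V => vertexSum A c u ≠ vertexSum A c v := by
  obtain ⟨A, c, hA, hc, hne⟩ :=
    connected_even_regular_admits_antimagic_orientation_general G hconn fun v => by simp [hreg v]
  exact ⟨A, c, hA, hc, fun u v huv h => hne huv (by rw [h, hreg, hreg])⟩
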